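/- In the high privacy regime, the optimal cost satisfies V*(ε) = 2Δ/ε − Δε²/(36√3) + O(ε³) as ε → 0⁺; precisely, lim_{ε→0⁺} (V*(ε) − 2Δ/ε)/ε² = −Δ/(36√3). In particular the gap between V*(ε) and the Laplacian-mechanism cost 2Δ/ε tends to 0 as ε → 0⁺. -/

import Mathlib

open MeasureTheory Real Filter
open scoped ENNReal Topology

noncomputable section

/-- The ℓ¹ norm on ℝ². -/
def l1 (x : ℝ × ℝ) : ℝ := |x.1| + |x.2|

/-- The ε-differential-privacy constraint on a measure on ℝ² with sensitivity Δ. -/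
def DPC (ε Δ : ℝ) (μ : Measure (ℝ × ℝ)) : Prop :=
  ∀ S : Set (ℝ × ℝ), MeasurableSet S → ∀ t : ℝ × ℝ, l1 t ≤ Δ →
    μ S ≤ ENNReal.ofReal (Real.exp ε) * μ ((· + t) '' S)

/-- Expected ℓ¹ cost of a noise distribution. -/
def cost (μ : Measure (ℝ × ℝ)) : ℝ≥0∞ := ∫⁻ x, ENNReal.ofReal (l1 x) ∂μ

/-- The optimal cost V*(ε): the infimum of the expected ℓ¹ cost over all probability
measures on ℝ² satisfying the ε-differential-privacy constraint. -/
def Vstar (Δ ε : ℝ) : ℝ≥0∞ :=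
  ⨅ (μ : Measure (ℝ × ℝ)) (_ : IsProbabilityMeasure μ ∧ DPC ε Δ μ), cost μ

/-!
Adding independent noise does not destroy differential privacy, so the noise may be smoothed, and
in polar coordinates its density along each ray is a profile `F` with `q * F r ≤ F r'` for
`|r - r'| ≤ 1`, where `q = exp (-ε)` and lengths are measured in units of `Δ`. On each fibre
`s + ℕ` such a profile is compared with a multiple of the geometric sequence `k ↦ q ^ k`, with all
the fibres sharing one constant; summing the comparisons shows that a staircase profile
`r ↦ q ^ ⌊r + 1 - γ⌋₊` minimizes the ratio of `∫ r ^ 2 * F r` to `∫ r * F r`.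
Hence `Vstar Δ ε / Δ` is the minimum over `γ ∈ [0, 1]` of an explicit mean radius. With
`γ = 1 / 2 + t`, the expansion of `coth (ε / 2)` shows that this mean is
`2 / ε + ε ^ 2 * (t ^ 3 / 3 - t / 12) + o(ε ^ 2)` uniformly in `t`, and on `[-1/2, 1/2]` the cubic
is smallest at `t = 1 / (2 * √3)`, with value `-1 / (36 * √3)`.
-/

section General

lemma tsum_ofReal_le_tsum_ofReal {ι : Type*} {a b e : ι → ℝ} (ha : ∀ i, 0 ≤ a i)
    (hb : ∀ i, 0 ≤ b i) (he : Summable e) (he_nonneg : 0 ≤ ∑' i, e i)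
    (h : ∀ i, a i + e i ≤ b i) :
    ∑' i, ENNReal.ofReal (a i) ≤ ∑' i, ENNReal.ofReal (b i) := by
  by_cases hsum : Summable b
  · have ha_sum : Summable a :=
      .of_nonneg_of_le ha (fun i => le_sub_iff_add_le.2 (h i)) (hsum.sub he)
    rw [← ENNReal.ofReal_tsum_of_nonneg ha ha_sum, ← ENNReal.ofReal_tsum_of_nonneg hb hsum]
    refine ENNReal.ofReal_le_ofReal ?_
    linarith [(ha_sum.add he).tsum_le_tsum h hsum, ha_sum.tsum_add he]
  · rw [show ∑' i, ENNReal.ofReal (b i) = ⊤ from ?_]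
    · exact le_top
    · by_contra hfin
      refine hsum ((ENNReal.summable_toReal hfin).congr fun i => ?_)
      rw [ENNReal.toReal_ofReal (hb i)]

lemma lintegral_Ioi_eq_lintegral_Ico_tsum {f : ℝ → ℝ≥0∞} (hf : Measurable f) :
    ∫⁻ r in Set.Ioi 0, f r = ∫⁻ s in Set.Ico 0 1, ∑' k : ℕ, f (s + k) := by
  have cover : ⋃ k : ℕ, Set.Ico (k : ℝ) (k + 1) = Set.Ici 0 := by
    simpa using iUnion_Ico_map_succ_eq_Ici (f := ((↑) : ℕ → ℝ)) (by simp)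
      (not_bddAbove_of_tendsto_atTop tendsto_natCast_atTop_atTop)
  have disjoint : Pairwise (Function.onFun Disjoint fun k : ℕ => Set.Ico (k : ℝ) (k + 1)) := by
    simpa using (Nat.mono_cast (α := ℝ)).pairwise_disjoint_on_Ico_succ
  have shift (k : ℕ) : ∫⁻ r in Set.Ico (k : ℝ) (k + 1), f r = ∫⁻ s in Set.Ico 0 1, f (s + k) := by
    rw [← (measurePreserving_add_right volume (k : ℝ)).setLIntegral_comp_preimage_emb
      (measurableEmbedding_addRight (k : ℝ))]
    simp
  have measurable_shift (k : ℕ) : Measurable fun s : ℝ => f (s + k) := by fun_prop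
  calc ∫⁻ r in Set.Ioi 0, f r
      = ∫⁻ r in ⋃ k : ℕ, Set.Ico (k : ℝ) (k + 1), f r := by
        rw [cover, setLIntegral_congr Ioi_ae_eq_Ici]
    _ = ∑' k : ℕ, ∫⁻ s in Set.Ico 0 1, f (s + k) := by
        rw [lintegral_iUnion (fun _ => measurableSet_Ico) disjoint, tsum_congr shift]
    _ = ∫⁻ s in Set.Ico 0 1, ∑' k : ℕ, f (s + k) :=
        (lintegral_tsum fun k => (measurable_shift k).aemeasurable).symm

lemma lintegral_eq_lintegral_toSphere {E : Type*} [NormedAddCommGroup E] [NormedSpace ℝ E]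
    [FiniteDimensional ℝ E] [Nontrivial E] [MeasurableSpace E] [BorelSpace E] (μ : Measure E)
    [μ.IsAddHaarMeasure] {f : E → ℝ≥0∞} (hf : Measurable f) :
    ∫⁻ x, f x ∂μ = ∫⁻ ω, (∫⁻ r in Set.Ioi (0 : ℝ),
      ENNReal.ofReal (r ^ (Module.finrank ℝ E - 1)) * f (r • (ω : E))) ∂μ.toSphere := by
  have hf' : Measurable fun p : Metric.sphere (0 : E) 1 × Set.Ioi (0 : ℝ) =>
      f (p.2.1 • (p.1 : E)) := by fun_prop
  calc ∫⁻ x, f x ∂μ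
      = ∫⁻ x : ({0}ᶜ : Set E), f x ∂μ.comap (↑) := by
        rw [lintegral_subtype_comap (measurableSet_singleton _).compl, restrict_compl_singleton]
    _ = ∫⁻ p, f (p.2.1 • (p.1 : E))
          ∂μ.toSphere.prod (Measure.volumeIoiPow (Module.finrank ℝ E - 1)) := by
        rw [← μ.measurePreserving_homeomorphUnitSphereProd.lintegral_comp hf']
        refine lintegral_congr fun x => ?_
        simp [smul_inv_smul₀ (norm_ne_zero_iff.2 x.2)]
    _ = _ := by
        rw [lintegral_prod _ hf'.aemeasurable]
        refine lintegral_congr fun ω => ?_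
        rw [Measure.volumeIoiPow, lintegral_withDensity_eq_lintegral_mul _ (by fun_prop)
          (by fun_prop), ← lintegral_subtype_comap measurableSet_Ioi]
        rfl

lemma measurable_measure_closedBall {X : Type*} [PseudoMetricSpace X] [SecondCountableTopology X]
    [MeasurableSpace X] [OpensMeasurableSpace X] (μ : Measure X) [SFinite μ] (δ : ℝ) :
    Measurable fun x => μ (Metric.closedBall x δ) :=
  measurable_measure_prodMk_left (ν := μ) (s := {p : X × X | dist p.2 p.1 ≤ δ})
    (measurableSet_le (by fun_prop) (by fun_prop))

lemma lintegral_mul_measure_closedBall {X : Type*} [PseudoMetricSpace X]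
    [SecondCountableTopology X] [MeasurableSpace X] [OpensMeasurableSpace X] (μ ν : Measure X)
    [SFinite μ] [SFinite ν] {f : X → ℝ≥0∞} (hf : Measurable f) (δ : ℝ) :
    ∫⁻ x, f x * μ (Metric.closedBall x δ) ∂ν = ∫⁻ y, ∫⁻ x in Metric.closedBall y δ, f x ∂ν ∂μ := by
  set close : Set (X × X) := {p | dist p.2 p.1 ≤ δ}
  have hclose : MeasurableSet close := measurableSet_le (by fun_prop) (by fun_prop)
  calc ∫⁻ x, f x * μ (Metric.closedBall x δ) ∂ν
      = ∫⁻ x, ∫⁻ y, close.indicator (fun p => f p.1) (x, y) ∂μ ∂ν := by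
        refine lintegral_congr fun x => ?_
        rw [← lintegral_indicator_const Metric.isClosed_closedBall.measurableSet]
        rfl
    _ = ∫⁻ y, ∫⁻ x, close.indicator (fun p => f p.1) (x, y) ∂ν ∂μ :=
        lintegral_lintegral_swap ((hf.comp measurable_fst).indicator hclose).aemeasurable
    _ = ∫⁻ y, ∫⁻ x in Metric.closedBall y δ, f x ∂ν ∂μ := by
        refine lintegral_congr fun y => ?_
        rw [← lintegral_indicator Metric.isClosed_closedBall.measurableSet]
        refine lintegral_congr fun x => ?_
        simp [Set.indicator, close, dist_comm]

lemma tendstoUniformlyOn_of_continuousAt {X Y Z : Type*} [TopologicalSpace X] [TopologicalSpace Y]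
    [UniformSpace Z] {f : X → Y → Z} {x₀ : X} {K : Set Y} (hK : IsCompact K)
    (hf : ∀ y ∈ K, ContinuousAt (Function.uncurry f) (x₀, y)) :
    TendstoUniformlyOn f (f x₀) (𝓝 x₀) K := by
  intro U hU
  refine hK.eventually_forall_of_forall_eventually fun y hy => ?_
  have moving : Tendsto (fun p : X × Y => f p.1 p.2) (𝓝 (x₀, y)) (𝓝 (f x₀ y)) := hf y hy
  have fixed : Tendsto (fun p : X × Y => f x₀ p.2) (𝓝 (x₀, y)) (𝓝 (f x₀ y)) :=
    moving.comp <| Continuous.tendsto' (f := fun p : X × Y => (x₀, p.2)) (by fun_prop) _ _ rfl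
  exact fixed.prodMk_nhds moving (nhds_le_uniformity _ hU)

lemma tendsto_of_isGLB_image {ι Y : Type*} {l : Filter ι} {f : ι → Y → ℝ} {g : Y → ℝ} {s : Set Y}
    {F : ι → ℝ} {m : ℝ} (hf : TendstoUniformlyOn f g l s) (hm : IsGLB (g '' s) m)
    (hF : ∀ᶠ x in l, IsGLB (f x '' s) (F x)) : Tendsto F l (𝓝 m) := by
  refine Metric.tendsto_nhds.2 fun ε hε => ?_
  filter_upwards [hF, Metric.tendstoUniformlyOn_iff.1 hf (ε / 2) (half_pos hε)] with x hx hclose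
  have close (y : Y) (hy : y ∈ s) : |g y - f x y| < ε / 2 := hclose y hy
  have lower : m - ε / 2 ≤ F x := hx.2 <| Set.forall_mem_image.2 fun y hy => by
    linarith [hm.1 (Set.mem_image_of_mem g hy), abs_lt.1 (close y hy)]
  have upper : F x - ε / 2 ≤ m := hm.2 <| Set.forall_mem_image.2 fun y hy => by
    linarith [hx.1 (Set.mem_image_of_mem (f x) hy), abs_lt.1 (close y hy)]
  rw [Real.dist_eq, abs_lt]
  constructor <;> linarith

lemma isGLB_image_sub_div {Y : Type*} {f : Y → ℝ} {s : Set Y} {m : ℝ} (h : IsGLB (f '' s) m)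
    (c : ℝ) {d : ℝ} (hd : 0 < d) : IsGLB ((fun y => (f y - c) / d) '' s) ((m - c) / d) := by
  have := (((OrderIso.subRight c).trans (OrderIso.divRight₀ d hd)).isGLB_image' (x := m)).2 h
  rwa [← Set.image_comp] at this

lemma exists_sign_change_of_convexOn {f : ℝ → ℝ} {a b : ℝ} (hab : a ≤ b)
    (hf : ConvexOn ℝ (Set.Icc a b) f) (hcont : ContinuousOn f (Set.Icc a b)) :
    ∃ u v, a ≤ u ∧ u ≤ v ∧ v ≤ b ∧ (u = a ∨ f u ≤ 0) ∧ (∀ s ∈ Set.Ico a u, 0 ≤ f s) ∧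
      (∀ s ∈ Set.Ico u v, f s ≤ 0) ∧ ∀ s ∈ Set.Ico v b, 0 ≤ f s := by
  set T : Set ℝ := Set.Icc a b ∩ f ⁻¹' Set.Iic 0
  have pos_of_notMem {s : ℝ} (hs : s ∈ Set.Icc a b) (hsT : s ∉ T) : 0 < f s :=
    not_le.1 fun h => hsT ⟨hs, h⟩
  rcases T.eq_empty_or_nonempty with hT | hT
  · refine ⟨a, a, le_rfl, le_rfl, hab, .inl rfl, by simp, by simp, fun s hs => ?_⟩
    exact (pos_of_notMem ⟨hs.1, hs.2.le⟩ (by simp [hT])).le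
  have hcompact : IsCompact T :=
    isCompact_Icc.of_isClosed_subset (hcont.preimage_isClosed_of_isClosed isClosed_Icc isClosed_Iic)
      Set.inter_subset_left
  have hu : sInf T ∈ T := hcompact.sInf_mem hT
  have hv : sSup T ∈ T := hcompact.sSup_mem hT
  have right_pos {s : ℝ} (hs : s ∈ Set.Ioc (sSup T) b) : 0 < f s :=
    pos_of_notMem ⟨hv.1.1.trans hs.1.le, hs.2⟩ fun h =>
      (le_csSup hcompact.bddAbove h).not_gt hs.1
  refine ⟨sInf T, sSup T, hu.1.1, csInf_le hcompact.bddBelow hv, hv.1.2, .inr hu.2,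
    fun s hs => ?_, fun s hs => ?_, fun s hs => ?_⟩
  · have hsT : s ∉ T := notMem_of_lt_csInf hs.2 hcompact.bddBelow
    exact (pos_of_notMem ⟨hs.1, hs.2.le.trans hu.1.2⟩ hsT).le
  · exact (hf.le_max_of_mem_Icc hu.1 hv.1 ⟨hs.1, hs.2.le⟩).trans (max_le hu.2 hv.2)
  · rcases hs.1.eq_or_lt with rfl | hlt
    · have hright : ContinuousWithinAt f (Set.Ioc (sSup T) b) (sSup T) :=
        (hcont _ hv.1).mono fun s hs => ⟨hv.1.1.trans hs.1.le, hs.2⟩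
      rw [ContinuousWithinAt, nhdsWithin_Ioc_eq_nhdsGT hs.2] at hright
      refine ge_of_tendsto hright ?_
      filter_upwards [Ioc_mem_nhdsGT hs.2] with s hs using (right_pos hs).le
    · exact (right_pos ⟨hlt, hs.2.le⟩).le

end General

section Staircase

/-- The `n`-th moment of `s + X`, where `X` is geometric: `P(X = k) = (1 - q) * q ^ k`. -/
def geomMoment (q : ℝ) (n : ℕ) (s : ℝ) : ℝ := (1 - q) * ∑' k : ℕ, (s + k) ^ n * q ^ k

/-- The mean of `1 / 2 + X` for the geometric variable `X` of `geomMoment`. For `q = exp (-x)` it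
is `coth (x / 2) / 2`; its oddness in `x` is the reason for this choice of centre. -/
def geomCenter (q : ℝ) : ℝ := (1 + q) / (2 * (1 - q))

variable {q : ℝ}

lemma summable_add_pow_mul_geometric (h : |q| < 1) (n : ℕ) (s : ℝ) :
    Summable fun k : ℕ => (s + k) ^ n * q ^ k := by
  simp_rw [add_pow, Finset.sum_mul]
  refine summable_sum fun m _ => ?_
  refine ((summable_pow_mul_geometric_of_norm_lt_one (n - m) h).mul_left
    (s ^ m * n.choose m)).congr fun k => by ring

lemma hasSum_geomMoment (h : |q| < 1) (n : ℕ) (s : ℝ) :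
    HasSum (fun k : ℕ => (s + k) ^ n * q ^ k) (geomMoment q n s / (1 - q)) := by
  rw [geomMoment, mul_div_cancel_left₀ _ (by linarith [lt_of_abs_lt h])]
  exact (summable_add_pow_mul_geometric h n s).hasSum

lemma geomMoment_nonneg (h0 : 0 ≤ q) (h1 : q ≤ 1) (n : ℕ) {s : ℝ} (hs : 0 ≤ s) :
    0 ≤ geomMoment q n s :=
  mul_nonneg (sub_nonneg.2 h1) (tsum_nonneg fun _ => by positivity)

lemma hasSum_ascFactorial_mul_geometric (h : |q| < 1) (j : ℕ) :
    HasSum (fun k : ℕ => ((k + 1).ascFactorial j : ℝ) * q ^ k)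
      (j.factorial / (1 - q) ^ (j + 1)) := by
  have hchoose := (hasSum_choose_mul_geometric_of_norm_lt_one j h).mul_left (j.factorial : ℝ)
  rw [mul_one_div] at hchoose
  refine hchoose.congr_fun fun k => ?_
  rw [Nat.ascFactorial_eq_factorial_mul_choose]
  push_cast
  ring

lemma geomMoment_one (h : |q| < 1) (s : ℝ) : geomMoment q 1 s = geomCenter q + (s - 1 / 2) := by
  have h1 : 1 - q ≠ 0 := by linarith [lt_of_abs_lt h]
  have basis := hasSum_ascFactorial_mul_geometric h
  have hsum := (basis 1).add ((basis 0).mul_left (s - 1))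
  rw [geomMoment, (hsum.congr_fun fun k => ?_).tsum_eq, geomCenter]
  · simp only [Nat.factorial]
    push_cast
    field
  · simp only [Nat.ascFactorial]
    push_cast
    ring

lemma geomMoment_two (h : |q| < 1) (s : ℝ) :
    geomMoment q 2 s = (geomCenter q + (s - 1 / 2)) ^ 2 + (geomCenter q ^ 2 - 1 / 4) := by
  have h1 : 1 - q ≠ 0 := by linarith [lt_of_abs_lt h]
  have basis := hasSum_ascFactorial_mul_geometric h
  have hsum := (basis 2).add <| ((basis 1).mul_left (2 * s - 3)).add
    ((basis 0).mul_left ((s - 1) ^ 2))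
  rw [geomMoment, (hsum.congr_fun fun k => ?_).tsum_eq, geomCenter]
  · simp only [Nat.factorial]
    push_cast
    field
  · simp only [Nat.ascFactorial]
    push_cast
    ring

lemma geomMoment_three (h : |q| < 1) (s : ℝ) :
    geomMoment q 3 s = (geomCenter q + (s - 1 / 2)) ^ 3 +
      3 * (geomCenter q + (s - 1 / 2)) * (geomCenter q ^ 2 - 1 / 4) +
      2 * geomCenter q * (geomCenter q ^ 2 - 1 / 4) := by
  have h1 : 1 - q ≠ 0 := by linarith [lt_of_abs_lt h]
  have basis := hasSum_ascFactorial_mul_geometric h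
  have hsum := (basis 3).add <| ((basis 2).mul_left (3 * s - 6)).add <|
    ((basis 1).mul_left (3 * s ^ 2 - 9 * s + 7)).add ((basis 0).mul_left ((s - 1) ^ 3))
  rw [geomMoment, (hsum.congr_fun fun k => ?_).tsum_eq, geomCenter]
  · simp only [Nat.factorial]
    push_cast
    field
  · simp only [Nat.ascFactorial]
    push_cast
    ring

lemma geomMoment_three_sub (h : |q| < 1) (γ : ℝ) :
    geomMoment q 3 γ / 3 - 2 * geomCenter q * (geomMoment q 2 γ / 2) =
      (γ - 1 / 2) ^ 3 / 3 - (γ - 1 / 2) / 4 - geomCenter q / 6 := by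
  rw [geomMoment_two h, geomMoment_three h]
  ring

lemma half_lt_geomCenter (h0 : 0 < q) (h1 : q < 1) : 1 / 2 < geomCenter q := by
  rw [geomCenter, div_lt_div_iff₀ two_pos (by linarith)]
  linarith

lemma geomMoment_two_pos (h0 : 0 < q) (h1 : q < 1) {s : ℝ} (hs : 0 ≤ s) :
    0 < geomMoment q 2 s := by
  have hβ := half_lt_geomCenter h0 h1
  rw [geomMoment_two (abs_lt.2 ⟨by linarith, h1⟩)]
  nlinarith [hs, hβ]

/-- The density profile of the staircase mechanism with sensitivity `1`: the value is `1` on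
`[0, γ)` and drops by the factor `q` at each of the radii `γ, γ + 1, γ + 2, …`. -/
def stair (q γ r : ℝ) : ℝ := q ^ ⌊r + 1 - γ⌋₊

variable {γ : ℝ}

lemma measurable_stair (q γ : ℝ) : Measurable (stair q γ) :=
  (measurable_from_nat (f := fun n => q ^ n)).comp (Nat.measurable_floor.comp (by fun_prop))

lemma stair_nonneg (hq : 0 ≤ q) (γ r : ℝ) : 0 ≤ stair q γ r := pow_nonneg hq _

lemma stair_add_natCast (hγ : γ ≤ 1) {s : ℝ} (hs : 0 ≤ s) (k : ℕ) :
    stair q γ (s + k) = stair q γ s * q ^ k := by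
  rw [stair, stair, ← pow_add, ← Nat.floor_add_natCast (by linarith)]
  ring_nf

lemma stair_of_lt {r : ℝ} (h : r < γ) : stair q γ r = 1 := by
  rw [stair, Nat.floor_eq_zero.2 (by linarith), pow_zero]

lemma stair_of_le {r : ℝ} (h : γ ≤ r) (h' : r < γ + 1) : stair q γ r = q := by
  rw [stair, (Nat.floor_eq_iff (by linarith)).2 ⟨?_, ?_⟩, pow_one] <;> push_cast <;> linarith

lemma mul_stair_le_stair (h0 : 0 ≤ q) (h1 : q ≤ 1) {r r' : ℝ} (h : r' ≤ r + 1) :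
    q * stair q γ r ≤ stair q γ r' := by
  rw [stair, stair, ← pow_succ']
  refine pow_le_pow_of_le_one h0 h1 (Nat.lt_succ_iff.1 ((Nat.floor_lt' (by simp)).2 ?_))
  push_cast
  linarith [Nat.lt_floor_add_one (r + 1 - γ)]

lemma hasSum_stair (h0 : 0 ≤ q) (h1 : q < 1) (γ r : ℝ) :
    HasSum (fun k : ℕ => if r < γ + k then (1 - q) * q ^ k else 0) (stair q γ r) := by
  have mem_step (k : ℕ) : r < γ + k ↔ ⌊r + 1 - γ⌋₊ ≤ k := by
    rw [← Nat.lt_succ_iff, Nat.floor_lt' (by simp)]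
    push_cast
    constructor <;> intro <;> linarith
  have tail := (hasSum_geometric_of_lt_one h0 h1).mul_left ((1 - q) * q ^ ⌊r + 1 - γ⌋₊)
  rw [mul_right_comm, mul_inv_cancel₀ (sub_pos.2 h1).ne', one_mul] at tail
  refine ((add_left_injective ⌊r + 1 - γ⌋₊).hasSum_iff fun k hk => if_neg ?_).1
    (tail.congr_fun fun k => ?_)
  · rw [mem_step]
    exact fun hle => hk ⟨k - ⌊r + 1 - γ⌋₊, Nat.sub_add_cancel hle⟩
  · rw [Function.comp_apply, if_pos ((mem_step _).2 (Nat.le_add_left _ _))]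
    ring

lemma setLIntegral_Ioo_pow {a : ℝ} (ha : 0 ≤ a) (n : ℕ) :
    ∫⁻ r in Set.Ioo 0 a, ENNReal.ofReal (r ^ n) = ENNReal.ofReal (a ^ (n + 1) / (n + 1)) := by
  rw [setLIntegral_congr Ioo_ae_eq_Ioc,
    ← ofReal_integral_eq_lintegral_ofReal (intervalIntegral.intervalIntegrable_pow n).1,
    ← intervalIntegral.integral_of_le ha]
  · simp
  · filter_upwards [ae_restrict_mem measurableSet_Ioc] with r hr using pow_nonneg hr.1.le n

lemma ofReal_pow_mul_stair (h0 : 0 ≤ q) (h1 : q < 1) (γ : ℝ) (n : ℕ) {r : ℝ} (hr : 0 ≤ r) :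
    ENNReal.ofReal (r ^ n * stair q γ r) = ∑' k : ℕ, ENNReal.ofReal ((1 - q) * q ^ k) *
      (Set.Iio (γ + k)).indicator (fun r => ENNReal.ofReal (r ^ n)) r := by
  have hsum := (hasSum_stair h0 h1 γ r).mul_left (r ^ n)
  rw [← hsum.tsum_eq, ENNReal.ofReal_tsum_of_nonneg (fun k => ?_) hsum.summable]
  · refine tsum_congr fun k => ?_
    by_cases hk : r < γ + k
    · simp [hk, ENNReal.ofReal_mul, pow_nonneg hr, mul_comm]
    · simp [hk]
  · have := sub_nonneg.2 h1.le
    positivity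

lemma lintegral_pow_mul_stair (h0 : 0 ≤ q) (h1 : q < 1) (hγ : 0 ≤ γ) (n : ℕ) :
    ∫⁻ r in Set.Ioi 0, ENNReal.ofReal (r ^ n * stair q γ r) =
      ENNReal.ofReal (geomMoment q (n + 1) γ / (n + 1)) := by
  have weight_nonneg (k : ℕ) : 0 ≤ (1 - q) * q ^ k :=
    mul_nonneg (sub_pos.2 h1).le (pow_nonneg h0 k)
  have layer (k : ℕ) : ∫⁻ r in Set.Ioi 0, ENNReal.ofReal ((1 - q) * q ^ k) *
      (Set.Iio (γ + k)).indicator (fun r => ENNReal.ofReal (r ^ n)) r =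
        ENNReal.ofReal ((1 - q) / (n + 1) * ((γ + k) ^ (n + 1) * q ^ k)) := by
    rw [lintegral_const_mul' _ _ ENNReal.ofReal_ne_top, setLIntegral_indicator measurableSet_Iio,
      Set.inter_comm, Set.Ioi_inter_Iio, setLIntegral_Ioo_pow (by positivity),
      ← ENNReal.ofReal_mul (weight_nonneg k)]
    ring_nf
  have total := (hasSum_geomMoment (abs_lt.2 ⟨by linarith, h1⟩) (n + 1) γ).mul_left
    ((1 - q) / (n + 1))
  have measurable_layer (k : ℕ) : Measurable fun r : ℝ => ENNReal.ofReal ((1 - q) * q ^ k) *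
      (Set.Iio (γ + k)).indicator (fun r => ENNReal.ofReal (r ^ n)) r :=
    ((by fun_prop : Measurable fun r : ℝ => ENNReal.ofReal (r ^ n)).indicator
      measurableSet_Iio).const_mul _
  rw [setLIntegral_congr_fun measurableSet_Ioi fun r hr => ofReal_pow_mul_stair h0 h1 γ n hr.le,
    lintegral_tsum fun k => (measurable_layer k).aemeasurable, tsum_congr layer,
    ← ENNReal.ofReal_tsum_of_nonneg (fun k => ?_) total.summable, total.tsum_eq]
  · field_simp [(sub_pos.2 h1).ne']
  · have := sub_nonneg.2 h1.le
    positivity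

/-- The mean of the radius under the planar law with density proportional to `stair q γ ‖x‖`. -/
def stairMean (q γ : ℝ) : ℝ := (geomMoment q 3 γ / 3) / (geomMoment q 2 γ / 2)

lemma stairMean_nonneg (h0 : 0 ≤ q) (h1 : q ≤ 1) {γ : ℝ} (hγ : 0 ≤ γ) : 0 ≤ stairMean q γ :=
  div_nonneg (div_nonneg (geomMoment_nonneg h0 h1 3 hγ) (by norm_num))
    (div_nonneg (geomMoment_nonneg h0 h1 2 hγ) (by norm_num))

end Staircase

section Radial

/-- The differential-privacy constraint along a ray: `F r` is the weight of the noise at radius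
`r`, radii are measured in units of the sensitivity, and `q = exp (-ε)`. -/
def IsDPProfile (q : ℝ) (F : ℝ → ℝ) : Prop :=
  ∀ r r', 0 ≤ r → 0 ≤ r' → |r - r'| ≤ 1 → q * F r ≤ F r'

variable {q V : ℝ} {F : ℝ → ℝ}

lemma IsDPProfile.nonneg (hF : IsDPProfile q F) (h1 : q < 1) {r : ℝ} (hr : 0 ≤ r) : 0 ≤ F r := by
  have := hF r r hr hr (by simp)
  nlinarith

lemma IsDPProfile.div_pow_le_div_pow_succ (hF : IsDPProfile q F) (h0 : 0 < q) {r r' : ℝ}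
    (hr : 0 ≤ r) (hr' : 0 ≤ r') (h : |r - r'| ≤ 1) (k : ℕ) : F r / q ^ k ≤ F r' / q ^ (k + 1) := by
  rw [pow_succ, ← div_div, div_right_comm]
  gcongr
  exact (le_div_iff₀' h0).2 (hF r r' hr hr' h)

lemma IsDPProfile.monotone_div_pow (hF : IsDPProfile q F) (h0 : 0 < q) {s : ℝ} (hs : 0 ≤ s) :
    Monotone fun k : ℕ => F (s + k) / q ^ k := by
  refine monotone_nat_of_le_succ fun k => ?_
  exact hF.div_pow_le_div_pow_succ h0 (by positivity) (by positivity) (by push_cast; simp) k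

lemma IsDPProfile.mul_sub_nonneg (hF : IsDPProfile q F) (h0 : 0 < q) {s : ℝ} (hs : 0 ≤ s)
    {j : ℕ} (hj : |s + j - V| ≤ 1) (k : ℕ) :
    0 ≤ (s + k - V) * (F (s + k) - F (s + j) / q ^ j * q ^ k) := by
  have hmono := hF.monotone_div_pow h0 hs
  have hqk : 0 < q ^ k := pow_pos h0 k
  obtain ⟨hj₁, hj₂⟩ := abs_le.1 hj
  rcases lt_trichotomy k j with h | rfl | h
  · have hk : (k : ℝ) + 1 ≤ j := mod_cast h
    refine mul_nonneg_of_nonpos_of_nonpos (by linarith) (sub_nonpos.2 ?_)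
    exact (div_le_iff₀ hqk).1 (hmono h.le)
  · rw [div_mul_cancel₀ _ hqk.ne', sub_self, mul_zero]
  · have hk : (j : ℝ) + 1 ≤ k := mod_cast h
    refine mul_nonneg (by linarith) (sub_nonneg.2 ?_)
    exact (le_div_iff₀ hqk).1 (hmono h.le)

lemma mul_geomMoment_one_lt_geomMoment_two (h0 : 0 < q) (h1 : q < 1) {s : ℝ} (hs : 0 < s)
    (hVs : V < s) : V * geomMoment q 1 s < geomMoment q 2 s := by
  have hβ := half_lt_geomCenter h0 h1
  have hq : |q| < 1 := abs_lt.2 ⟨by linarith, h1⟩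
  rw [geomMoment_one hq, geomMoment_two hq]
  nlinarith [hs, hVs, hβ]

lemma exists_sign_change_geomMoment (h0 : 0 < q) (h1 : q < 1) (hV : 0 ≤ V) :
    ∃ u γ, 0 ≤ u ∧ u ≤ γ ∧ γ ≤ 1 ∧ u ≤ V ∧
      (∀ s ∈ Set.Ico 0 u, 0 ≤ geomMoment q 2 s - V * geomMoment q 1 s) ∧
      (∀ s ∈ Set.Ico u γ, geomMoment q 2 s - V * geomMoment q 1 s ≤ 0) ∧
      ∀ s ∈ Set.Ico γ 1, 0 ≤ geomMoment q 2 s - V * geomMoment q 1 s := by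
  have hq : |q| < 1 := abs_lt.2 ⟨by linarith, h1⟩
  set f : ℝ → ℝ := fun s => geomMoment q 2 s - V * geomMoment q 1 s
  have hf (s : ℝ) : f s = (geomCenter q + (s - 1 / 2)) ^ 2 + (geomCenter q ^ 2 - 1 / 4) -
      V * (geomCenter q + (s - 1 / 2)) := by
    simp only [f, geomMoment_one hq, geomMoment_two hq]
  have convex : ConvexOn ℝ (Set.Icc 0 1) f := by
    refine ⟨convex_Icc 0 1, fun x _ y _ a b ha hb hab => ?_⟩
    obtain rfl : b = 1 - a := by linarith
    simp only [hf, smul_eq_mul]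
    nlinarith [mul_nonneg (mul_nonneg ha hb) (sq_nonneg (x - y))]
  have continuous : Continuous f := by
    simp only [funext hf]
    fun_prop
  obtain ⟨u, γ, hu, huγ, hγ, hu', hsign⟩ :=
    exists_sign_change_of_convexOn zero_le_one convex continuous.continuousOn
  refine ⟨u, γ, hu, huγ, hγ, ?_, hsign⟩
  rcases hu' with rfl | hfu
  · exact hV
  · by_contra! hVu
    linarith [mul_geomMoment_one_lt_geomMoment_two h0 h1 (hV.trans_lt hVu) hVu]

lemma IsDPProfile.exists_separating_level (hF : IsDPProfile q F) (h0 : 0 < q) (h1 : q < 1)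
    {u γ : ℝ} (hu : 0 ≤ u) (hγ : γ ≤ u + 1) (m : ℕ) :
    ∃ C, 0 ≤ C ∧ (∀ s ∈ Set.Ico u γ, F (s + m) / q ^ m ≤ C) ∧
      ∀ r, 0 ≤ r → (∀ s ∈ Set.Ico u γ, |s + m - r| ≤ 1) → C ≤ F r / q ^ (m + 1) := by
  set A : Set ℝ := (fun s => F (s + m) / q ^ m) '' Set.Ico u γ
  have index_nonneg {s : ℝ} (hs : s ∈ Set.Ico u γ) : 0 ≤ s + m := by
    linarith [hs.1, m.cast_nonneg (α := ℝ)]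
  have near {r : ℝ} (hr : 0 ≤ r) (hclose : ∀ s ∈ Set.Ico u γ, |s + m - r| ≤ 1) :
      F r / q ^ (m + 1) ∈ upperBounds A := Set.forall_mem_image.2 fun s hs =>
    hF.div_pow_le_div_pow_succ h0 (index_nonneg hs) hr (hclose s hs) m
  have bounded : BddAbove A := ⟨_, near (r := u + m) (by positivity) fun s hs => by
    rw [abs_le]; constructor <;> linarith [hs.1, hs.2]⟩
  refine ⟨sSup A, Real.sSup_nonneg <| Set.forall_mem_image.2 fun s hs => ?_,
    fun s hs => le_csSup bounded ⟨s, hs, rfl⟩, fun r hr hclose => ?_⟩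
  · exact div_nonneg (hF.nonneg h1 (index_nonneg hs)) (pow_pos h0 m).le
  · exact Real.sSup_le (near hr hclose) (div_nonneg (hF.nonneg h1 hr) (pow_pos h0 _).le)

-- On the fibre `s + ℕ` the profile crosses the multiple `F (s + j) / q ^ j` of the geometric
-- sequence at the index `j` next to `V`; the single constant `C` serves all fibres at once.
lemma IsDPProfile.exists_stair_comparison (hF : IsDPProfile q F) (h0 : 0 < q) (h1 : q < 1)
    (hV : 0 ≤ V) : ∃ γ ∈ Set.Icc (0 : ℝ) 1, ∃ C, 0 ≤ C ∧ ∀ s ∈ Set.Ico (0 : ℝ) 1, ∃ j : ℕ,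
      |s + j - V| ≤ 1 ∧ 0 ≤ (F (s + j) / q ^ j - C * stair q γ s) *
        (geomMoment q 2 s - V * geomMoment q 1 s) := by
  obtain ⟨u, γ, hu, huγ, hγ, huV, before, between, after⟩ :=
    exists_sign_change_geomMoment h0 h1 hV
  set m := ⌊V - u⌋₊
  have hm : (m : ℝ) ≤ V - u := Nat.floor_le (by linarith)
  have hm' : V - u < m + 1 := Nat.lt_floor_add_one _
  obtain ⟨C, hC, le_level, level_le⟩ := hF.exists_separating_level h0 h1 hu (γ := γ) (by linarith) m
  refine ⟨γ, ⟨hu.trans huγ, hγ⟩, C, hC, fun s ⟨hs0, hs1⟩ => ?_⟩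
  rcases lt_or_ge s u with hsu | hus
  · refine ⟨m + 1, ?_, mul_nonneg ?_ (before s ⟨hs0, hsu⟩)⟩
    · push_cast; rw [abs_le]; constructor <;> linarith
    · rw [stair_of_lt (hsu.trans_le huγ), mul_one, sub_nonneg]
      refine level_le _ (by positivity) fun s' hs' => ?_
      push_cast; rw [abs_le]; constructor <;> linarith [hs'.1, hs'.2]
  have index_close : |s + m - V| ≤ 1 := by rw [abs_le]; constructor <;> linarith
  rcases lt_or_ge s γ with hsγ | hγs
  · refine ⟨m, index_close, mul_nonneg_of_nonpos_of_nonpos ?_ (between s ⟨hus, hsγ⟩)⟩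
    rw [stair_of_lt hsγ, mul_one, sub_nonpos]
    exact le_level s ⟨hus, hsγ⟩
  · refine ⟨m, index_close, mul_nonneg ?_ (after s ⟨hγs, hs1⟩)⟩
    have := level_le (s + m) (by positivity) fun s' hs' => by
      rw [abs_le]; constructor <;> linarith [hs'.1, hs'.2]
    rw [pow_succ, ← div_div, le_div_iff₀ h0] at this
    rw [stair_of_le hγs (by linarith), sub_nonneg]
    exact this

lemma IsDPProfile.tsum_le_tsum (hF : IsDPProfile q F) (h0 : 0 < q) (h1 : q < 1) (hV : 0 ≤ V)
    {γ C s : ℝ} (hγ : γ ≤ 1) (hC : 0 ≤ C) (hs : 0 ≤ s) {j : ℕ} (hj : |s + j - V| ≤ 1)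
    (hsign : 0 ≤ (F (s + j) / q ^ j - C * stair q γ s) *
      (geomMoment q 2 s - V * geomMoment q 1 s)) :
    ∑' k : ℕ, ENNReal.ofReal
        (V * ((s + k) * F (s + k)) + C * ((s + k) ^ 2 * stair q γ (s + k))) ≤
      ∑' k : ℕ, ENNReal.ofReal
        ((s + k) ^ 2 * F (s + k) + V * C * ((s + k) ^ 1 * stair q γ (s + k))) := by
  have hF0 (k : ℕ) : 0 ≤ F (s + k) := hF.nonneg h1 (by positivity)
  have hstair (r : ℝ) : 0 ≤ stair q γ r := stair_nonneg h0.le γ r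
  have hq : |q| < 1 := abs_lt.2 ⟨by linarith, h1⟩
  have quadratic := (hasSum_geomMoment hq 2 s).sub ((hasSum_geomMoment hq 1 s).mul_left V)
  have error := quadratic.mul_left (F (s + j) / q ^ j - C * stair q γ s)
  refine tsum_ofReal_le_tsum_ofReal (fun k => ?_) (fun k => ?_) error.summable ?_ fun k => ?_
  · exact add_nonneg (mul_nonneg hV (mul_nonneg (by positivity) (hF0 k)))
      (mul_nonneg hC (mul_nonneg (by positivity) (hstair _)))
  · exact add_nonneg (mul_nonneg (by positivity) (hF0 k))
      (mul_nonneg (mul_nonneg hV hC) (mul_nonneg (by positivity) (hstair _)))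
  · rw [error.tsum_eq, ← mul_div_assoc, ← sub_div, ← mul_div_assoc]
    exact div_nonneg hsign (sub_pos.2 h1).le
  · rw [stair_add_natCast hγ hs]
    nlinarith [mul_nonneg (by positivity : 0 ≤ s + k) (hF.mul_sub_nonneg h0 hs hj k)]

lemma lintegral_add_mul_stair (h0 : 0 ≤ q) (h1 : q < 1) {γ c : ℝ} (hγ : 0 ≤ γ) (hc : 0 ≤ c)
    (n : ℕ) {G : ℝ → ℝ} (hG : ∀ r, 0 < r → 0 ≤ G r) :
    ∫⁻ r in Set.Ioi 0, ENNReal.ofReal (G r + c * (r ^ n * stair q γ r)) =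
      (∫⁻ r in Set.Ioi 0, ENNReal.ofReal (G r)) +
        ENNReal.ofReal (c * (geomMoment q (n + 1) γ / (n + 1))) := by
  have hstair := measurable_stair q γ
  calc _ = ∫⁻ r in Set.Ioi 0, ENNReal.ofReal (G r) +
        ENNReal.ofReal c * ENNReal.ofReal (r ^ n * stair q γ r) := by
        refine setLIntegral_congr_fun measurableSet_Ioi fun r hr => ?_
        have hr : 0 < r := hr
        have := stair_nonneg h0 γ r
        rw [← ENNReal.ofReal_mul hc, ENNReal.ofReal_add (hG r hr) (by positivity)]
    _ = _ := by
        rw [lintegral_add_right _ (by fun_prop), lintegral_const_mul' _ _ ENNReal.ofReal_ne_top,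
          lintegral_pow_mul_stair h0 h1 hγ, ← ENNReal.ofReal_mul hc]

lemma IsDPProfile.mul_lintegral_le_lintegral (hF : IsDPProfile q F) (hFm : Measurable F)
    (h0 : 0 < q) (h1 : q < 1) (hV : 0 ≤ V) (hVmin : ∀ γ ∈ Set.Icc 0 1, V ≤ stairMean q γ) :
    ENNReal.ofReal V * ∫⁻ r in Set.Ioi 0, ENNReal.ofReal (r * F r) ≤
      ∫⁻ r in Set.Ioi 0, ENNReal.ofReal (r ^ 2 * F r) := by
  obtain ⟨γ, hγ, C, hC, hpivot⟩ := hF.exists_stair_comparison h0 h1 hV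
  have hstair := measurable_stair q γ
  have hFpos (r : ℝ) (hr : 0 < r) : 0 ≤ F r := hF.nonneg h1 hr.le
  have comparison : ∫⁻ r in Set.Ioi 0,
        ENNReal.ofReal (V * (r * F r) + C * (r ^ 2 * stair q γ r)) ≤
      ∫⁻ r in Set.Ioi 0, ENNReal.ofReal (r ^ 2 * F r + V * C * (r ^ 1 * stair q γ r)) := by
    rw [lintegral_Ioi_eq_lintegral_Ico_tsum (by fun_prop),
      lintegral_Ioi_eq_lintegral_Ico_tsum (by fun_prop)]
    refine setLIntegral_mono' measurableSet_Ico fun s hs => ?_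
    obtain ⟨j, hj, hsign⟩ := hpivot s hs
    exact hF.tsum_le_tsum h0 h1 hV hγ.2 hC hs.1 hj hsign
  rw [lintegral_add_mul_stair h0.le h1 hγ.1 hC 2 fun r hr =>
      mul_nonneg hV (mul_nonneg hr.le (hFpos r hr)),
    lintegral_add_mul_stair h0.le h1 hγ.1 (mul_nonneg hV hC) 1 fun r hr =>
      mul_nonneg (sq_nonneg r) (hFpos r hr)] at comparison
  have moments : ENNReal.ofReal (V * C * (geomMoment q 2 γ / 2)) ≤
      ENNReal.ofReal (C * (geomMoment q 3 γ / 3)) := by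
    have := (le_div_iff₀ (half_pos (geomMoment_two_pos h0 h1 hγ.1))).1 (hVmin γ hγ)
    refine ENNReal.ofReal_le_ofReal ?_
    nlinarith
  rw [← lintegral_const_mul' _ _ ENNReal.ofReal_ne_top]
  simp_rw [← ENNReal.ofReal_mul hV]
  refine ENNReal.le_of_add_le_add_right (a := ENNReal.ofReal (C * (geomMoment q 3 γ / 3)))
    ENNReal.ofReal_ne_top ?_
  norm_num at comparison
  grw [← moments]
  exact comparison

end Radial

section Plane

variable {E : Type*} [NormedAddCommGroup E] [MeasurableSpace E] {ε q δ γ V : ℝ}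

/-- The `ε`-differential-privacy constraint for additive noise on a normed group, the sensitivity
being the unit of length. -/
def IsDP (ε : ℝ) (μ : Measure E) : Prop :=
  ∀ S : Set E, MeasurableSet S → ∀ t : E, ‖t‖ ≤ 1 →
    μ S ≤ ENNReal.ofReal (exp ε) * μ ((· + t) '' S)

lemma IsDP.smul {μ : Measure E} (hμ : IsDP ε μ) (c : ℝ≥0∞) : IsDP ε (c • μ) := by
  intro S hS t ht
  simp only [Measure.smul_apply, smul_eq_mul]
  rw [mul_left_comm]
  gcongr
  exact hμ S hS t ht

variable [BorelSpace E]

lemma IsDP.withDensity {ν : Measure E} [ν.IsAddRightInvariant] {f : E → ℝ≥0∞}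
    (hf : ∀ x y, ‖x - y‖ ≤ 1 → f x ≤ ENNReal.ofReal (exp ε) * f y) :
    IsDP ε (ν.withDensity f) := by
  intro S hS t ht
  have hSt : MeasurableSet ((· + t) '' S) :=
    (measurableEmbedding_addRight t).measurableSet_image.2 hS
  rw [withDensity_apply _ hS, withDensity_apply _ hSt,
    ← (measurePreserving_add_right ν t).setLIntegral_comp_emb (measurableEmbedding_addRight t),
    ← lintegral_const_mul' _ _ ENNReal.ofReal_ne_top]
  exact lintegral_mono fun x => hf x (x + t) (by simpa using ht)

lemma isDP_withDensity_stair (ν : Measure E) [ν.IsAddRightInvariant] (hε : 0 ≤ ε) (γ : ℝ) :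
    IsDP ε (ν.withDensity fun x => ENNReal.ofReal (stair (exp (-ε)) γ ‖x‖)) := by
  refine .withDensity fun x y hxy => ?_
  rw [← ENNReal.ofReal_mul (exp_pos ε).le]
  refine ENNReal.ofReal_le_ofReal ?_
  rw [← inv_mul_le_iff₀ (exp_pos ε), ← exp_neg]
  exact mul_stair_le_stair (exp_pos _).le (exp_le_one_iff.2 (by linarith))
    (by linarith [norm_le_norm_add_norm_sub x y])

lemma IsDP.measure_closedBall_le {μ : Measure E} (hμ : IsDP ε μ) {x y : E} (hxy : ‖x - y‖ ≤ 1)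
    (δ : ℝ) :
    μ (Metric.closedBall x δ) ≤ ENNReal.ofReal (exp ε) * μ (Metric.closedBall y δ) := by
  have image : (· + (y - x)) '' Metric.closedBall x δ = Metric.closedBall y δ := by
    simp
  rw [← image]
  exact hμ _ Metric.isClosed_closedBall.measurableSet _ (by rwa [norm_sub_rev])

variable [NormedSpace ℝ E]

lemma IsDP.isDPProfile_ray {μ : Measure E} [IsFiniteMeasure μ] (hμ : IsDP ε μ) {ω : E}
    (hω : ‖ω‖ = 1) (δ : ℝ) :
    IsDPProfile (exp (-ε)) fun r => μ.real (Metric.closedBall (r • ω) δ) := by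
  intro r r' _ _ h
  have close : ‖r • ω - r' • ω‖ ≤ 1 := by rwa [← sub_smul, norm_smul, hω, mul_one]
  have := ENNReal.toReal_mono (by finiteness) (hμ.measure_closedBall_le close δ)
  rw [ENNReal.toReal_mul, ENNReal.toReal_ofReal (exp_pos ε).le] at this
  rwa [exp_neg, inv_mul_le_iff₀ (exp_pos ε)]

variable [FiniteDimensional ℝ E]

lemma mul_lintegral_le_lintegral_enorm_mul (hE : Module.finrank ℝ E = 2) (ν : Measure E)
    [ν.IsAddHaarMeasure] {g : E → ℝ} (hg : Measurable g)
    (hray : ∀ ω : E, ‖ω‖ = 1 → IsDPProfile q fun r => g (r • ω)) (h0 : 0 < q) (h1 : q < 1)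
    (hV : 0 ≤ V) (hVmin : ∀ γ ∈ Set.Icc 0 1, V ≤ stairMean q γ) :
    ENNReal.ofReal V * ∫⁻ x, ENNReal.ofReal (g x) ∂ν ≤ ∫⁻ x, ‖x‖ₑ * ENNReal.ofReal (g x) ∂ν := by
  have : Nontrivial E := Module.nontrivial_of_finrank_pos (R := ℝ) (by omega)
  rw [lintegral_eq_lintegral_toSphere ν (by fun_prop),
    lintegral_eq_lintegral_toSphere ν (by fun_prop),
    ← lintegral_const_mul' _ _ ENNReal.ofReal_ne_top, hE]
  refine lintegral_mono fun ω => ?_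
  have hω : ‖(ω : E)‖ = 1 := by simp
  calc _ = ENNReal.ofReal V * ∫⁻ r in Set.Ioi 0, ENNReal.ofReal (r * g (r • (ω : E))) := by
        congr 1
        refine setLIntegral_congr_fun measurableSet_Ioi fun r hr => ?_
        rw [pow_one, ← ENNReal.ofReal_mul (le_of_lt hr)]
    _ ≤ ∫⁻ r in Set.Ioi 0, ENNReal.ofReal (r ^ 2 * g (r • (ω : E))) :=
        (hray ω hω).mul_lintegral_le_lintegral (by fun_prop) h0 h1 hV hVmin
    _ = _ := by
        refine setLIntegral_congr_fun measurableSet_Ioi fun r hr => ?_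
        have hr : 0 ≤ r := le_of_lt hr
        rw [enorm_smul, ← ofReal_norm, ← ofReal_norm, hω, Real.norm_of_nonneg hr,
          ENNReal.ofReal_one, mul_one, pow_one, sq, mul_assoc, ENNReal.ofReal_mul hr,
          ENNReal.ofReal_mul hr]

lemma lintegral_enorm_mul_measure_closedBall_le (μ ν : Measure E) [IsProbabilityMeasure μ]
    [ν.IsAddHaarMeasure] (hδ : 0 ≤ δ) :
    ∫⁻ x, ‖x‖ₑ * μ (Metric.closedBall x δ) ∂ν ≤
      ((∫⁻ x, ‖x‖ₑ ∂μ) + ENNReal.ofReal δ) * ν (Metric.closedBall 0 δ) := by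
  have ball_finite : ν (Metric.closedBall 0 δ) ≠ ⊤ := measure_closedBall_lt_top.ne
  rw [lintegral_mul_measure_closedBall μ ν measurable_enorm]
  calc _ ≤ ∫⁻ y, (‖y‖ₑ + ENNReal.ofReal δ) * ν (Metric.closedBall 0 δ) ∂μ := by
        refine lintegral_mono fun y => ?_
        rw [← ν.addHaar_closedBall_center y, ← setLIntegral_const]
        refine setLIntegral_mono' Metric.isClosed_closedBall.measurableSet fun x hx => ?_
        have : ‖x‖ ≤ ‖y‖ + δ := by
          linarith [norm_le_norm_add_norm_sub' x y, mem_closedBall_iff_norm.1 hx]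
        rw [← ofReal_norm, ← ofReal_norm, ← ENNReal.ofReal_add (norm_nonneg y) hδ]
        exact ENNReal.ofReal_le_ofReal this
    _ = _ := by
        rw [lintegral_mul_const' _ _ ball_finite, lintegral_add_right _ measurable_const,
          lintegral_const, measure_univ, mul_one]

lemma IsDP.ofReal_le_lintegral_enorm_add (hE : Module.finrank ℝ E = 2) {μ : Measure E}
    [IsProbabilityMeasure μ] (hμ : IsDP ε μ) (hε : 0 < ε) (hV : 0 ≤ V)
    (hVmin : ∀ γ ∈ Set.Icc 0 1, V ≤ stairMean (exp (-ε)) γ) (hδ : 0 < δ) :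
    ENNReal.ofReal V ≤ (∫⁻ x, ‖x‖ₑ ∂μ) + ENNReal.ofReal δ := by
  set ν : Measure E := Measure.addHaar
  have ball_pos : ν (Metric.closedBall 0 δ) ≠ 0 :=
    (Metric.measure_closedBall_pos ν 0 hδ).ne'
  have ball_finite : ν (Metric.closedBall 0 δ) ≠ ⊤ := measure_closedBall_lt_top.ne
  have smoothed : ENNReal.ofReal V * ∫⁻ x, μ (Metric.closedBall x δ) ∂ν ≤
      ∫⁻ x, ‖x‖ₑ * μ (Metric.closedBall x δ) ∂ν := by
    simpa using mul_lintegral_le_lintegral_enorm_mul hE ν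
      (g := fun x => μ.real (Metric.closedBall x δ))
      (measurable_measure_closedBall μ δ).ennreal_toReal
      (fun ω hω => hμ.isDPProfile_ray hω δ) (exp_pos _) (exp_lt_one_iff.2 (by linarith)) hV hVmin
  have mass : ∫⁻ x, μ (Metric.closedBall x δ) ∂ν = ν (Metric.closedBall 0 δ) := by
    simpa [ν.addHaar_closedBall_center] using lintegral_mul_measure_closedBall μ ν measurable_one δ
  have first_moment := lintegral_enorm_mul_measure_closedBall_le μ ν hδ.le
  rw [mass] at smoothed
  exact (ENNReal.mul_le_mul_iff_left ball_pos ball_finite).1 (smoothed.trans first_moment)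

lemma IsDP.ofReal_le_lintegral_enorm (hE : Module.finrank ℝ E = 2) {μ : Measure E}
    [IsProbabilityMeasure μ] (hμ : IsDP ε μ) (hε : 0 < ε) (hV : 0 ≤ V)
    (hVmin : ∀ γ ∈ Set.Icc 0 1, V ≤ stairMean (exp (-ε)) γ) :
    ENNReal.ofReal V ≤ ∫⁻ x, ‖x‖ₑ ∂μ := by
  refine ENNReal.le_of_forall_pos_le_add fun δ hδ _ => ?_
  simpa using hμ.ofReal_le_lintegral_enorm_add hE hε hV hVmin (NNReal.coe_pos.2 hδ)

lemma lintegral_norm_pow_mul_stair (hE : Module.finrank ℝ E = 2) (ν : Measure E)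
    [ν.IsAddHaarMeasure] (h0 : 0 ≤ q) (h1 : q < 1) (hγ : 0 ≤ γ) (n : ℕ) :
    ∫⁻ x, ENNReal.ofReal (‖x‖ ^ n * stair q γ ‖x‖) ∂ν =
      ENNReal.ofReal (geomMoment q (n + 2) γ / (n + 2)) * ν.toSphere Set.univ := by
  have : Nontrivial E := Module.nontrivial_of_finrank_pos (R := ℝ) (by omega)
  have hstair := measurable_stair q γ
  have inner (ω : Metric.sphere (0 : E) 1) : ∫⁻ r in Set.Ioi (0 : ℝ), ENNReal.ofReal (r ^ (2 - 1)) *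
      ENNReal.ofReal (‖r • (ω : E)‖ ^ n * stair q γ ‖r • (ω : E)‖) =
      ENNReal.ofReal (geomMoment q (n + 2) γ / (n + 2)) := by
    rw [← one_add_one_eq_two (R := ℝ), ← add_assoc, ← Nat.cast_add_one,
      ← lintegral_pow_mul_stair h0 h1 hγ]
    refine setLIntegral_congr_fun measurableSet_Ioi fun r hr => ?_
    have hr : 0 ≤ r := le_of_lt hr
    have hnorm : ‖r • (ω : E)‖ = r := by simp [norm_smul, abs_of_nonneg hr]
    rw [hnorm, ← ENNReal.ofReal_mul (by positivity)]
    ring_nf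
  rw [lintegral_eq_lintegral_toSphere ν (by fun_prop), hE, lintegral_congr inner, lintegral_const]

lemma withDensity_stair_univ (hE : Module.finrank ℝ E = 2) (ν : Measure E)
    [ν.IsAddHaarMeasure] (h0 : 0 ≤ q) (h1 : q < 1) (hγ : 0 ≤ γ) :
    ν.withDensity (fun x => ENNReal.ofReal (stair q γ ‖x‖)) Set.univ =
      ENNReal.ofReal (geomMoment q 2 γ / 2) * ν.toSphere Set.univ := by
  rw [withDensity_apply _ .univ, setLIntegral_univ]
  convert lintegral_norm_pow_mul_stair hE ν h0 h1 hγ 0 using 1 <;> norm_num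

lemma lintegral_enorm_withDensity_stair (hE : Module.finrank ℝ E = 2) (ν : Measure E)
    [ν.IsAddHaarMeasure] (h0 : 0 ≤ q) (h1 : q < 1) (hγ : 0 ≤ γ) :
    ∫⁻ x, ‖x‖ₑ ∂ν.withDensity (fun x => ENNReal.ofReal (stair q γ ‖x‖)) =
      ENNReal.ofReal (geomMoment q 3 γ / 3) * ν.toSphere Set.univ := by
  have hstair := measurable_stair q γ
  rw [lintegral_withDensity_eq_lintegral_mul _ (by fun_prop) measurable_enorm]
  convert lintegral_norm_pow_mul_stair hE ν h0 h1 hγ 1 using 1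
  · refine lintegral_congr fun x => ?_
    rw [Pi.mul_apply, mul_comm, ← ofReal_norm, pow_one, ENNReal.ofReal_mul (norm_nonneg x)]
  · norm_num

lemma exists_isDP_lintegral_enorm_eq (hE : Module.finrank ℝ E = 2) (hε : 0 < ε)
    (hγ : γ ∈ Set.Icc 0 1) :
    ∃ μ : Measure E, IsProbabilityMeasure μ ∧ IsDP ε μ ∧
      ∫⁻ x, ‖x‖ₑ ∂μ = ENNReal.ofReal (stairMean (exp (-ε)) γ) := by
  have : Nontrivial E := Module.nontrivial_of_finrank_pos (R := ℝ) (by omega)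
  set ν : Measure E := Measure.addHaar
  set q := exp (-ε)
  have h0 : 0 < q := exp_pos _
  have h1 : q < 1 := exp_lt_one_iff.2 (by linarith)
  set ρ : Measure E := ν.withDensity fun x => ENNReal.ofReal (stair q γ ‖x‖)
  have sphere_ne_zero : ν.toSphere Set.univ ≠ 0 :=
    Measure.measure_univ_ne_zero.2 ν.toSphere_ne_zero
  have mass : ρ Set.univ = ENNReal.ofReal (geomMoment q 2 γ / 2) * ν.toSphere Set.univ :=
    withDensity_stair_univ hE ν h0.le h1 hγ.1
  have mass_pos := half_pos (geomMoment_two_pos h0 h1 hγ.1)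
  have mass_ne_zero : ρ Set.univ ≠ 0 := by
    rw [mass]
    exact mul_ne_zero (by simpa using mass_pos) sphere_ne_zero
  have mass_ne_top : ρ Set.univ ≠ ⊤ := by
    rw [mass]
    finiteness
  refine ⟨(ρ Set.univ)⁻¹ • ρ, ⟨ENNReal.inv_mul_cancel mass_ne_zero mass_ne_top⟩,
    (isDP_withDensity_stair ν hε.le γ).smul _, ?_⟩
  rw [lintegral_smul_measure, lintegral_enorm_withDensity_stair hE ν h0.le h1 hγ.1, mass,
    smul_eq_mul, mul_comm, ← div_eq_mul_inv,
    ENNReal.mul_div_mul_right _ _ sphere_ne_zero (measure_ne_top _ _),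
    ← ENNReal.ofReal_div_of_pos mass_pos, stairMean]

end Plane

section Rescaling

variable {Δ ε : ℝ} {μ : Measure (ℝ × ℝ)}

/-- The plane with the `ℓ¹` norm, measured in units of the sensitivity `Δ`. -/
def rescale (hΔ : Δ ≠ 0) : ℝ × ℝ ≃ᵐ WithLp 1 (ℝ × ℝ) :=
  (MeasurableEquiv.smul₀ Δ⁻¹ (inv_ne_zero hΔ)).trans (MeasurableEquiv.toLp 1 (ℝ × ℝ))

lemma rescale_sub (hΔ : Δ ≠ 0) (x y : ℝ × ℝ) :
    rescale hΔ (x - y) = rescale hΔ x - rescale hΔ y := by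
  simp [rescale, smul_sub]

lemma rescale_preimage_image_add (hΔ : Δ ≠ 0) (S : Set (WithLp 1 (ℝ × ℝ))) (t : ℝ × ℝ) :
    rescale hΔ ⁻¹' ((· + rescale hΔ t) '' S) = (· + t) '' (rescale hΔ ⁻¹' S) := by
  ext x
  simp [Set.image_add_right, ← sub_eq_add_neg, rescale_sub]

lemma norm_rescale (hΔ : 0 < Δ) (x : ℝ × ℝ) : ‖rescale hΔ.ne' x‖ = l1 x / Δ := by
  simp [rescale, WithLp.prod_norm_eq_of_L1, l1, abs_of_pos hΔ]
  ring

lemma dpc_iff_isDP_map (hΔ : 0 < Δ) : DPC ε Δ μ ↔ IsDP ε (μ.map (rescale hΔ.ne')) := by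
  set e := rescale hΔ.ne'
  have unit (t : ℝ × ℝ) : ‖e t‖ ≤ 1 ↔ l1 t ≤ Δ := by rw [norm_rescale hΔ, div_le_one hΔ]
  constructor
  · intro hμ S hS t ht
    obtain ⟨u, rfl⟩ := e.surjective t
    rw [e.map_apply, e.map_apply, rescale_preimage_image_add]
    exact hμ _ (e.measurable hS) u ((unit u).1 ht)
  · intro hμ S hS u hu
    have := hμ (e '' S) (e.measurableSet_image.2 hS) (e u) ((unit u).2 hu)
    rwa [e.map_apply, e.map_apply, rescale_preimage_image_add,
      Set.preimage_image_eq S e.injective] at this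

lemma cost_eq (hΔ : 0 < Δ) :
    cost μ = ENNReal.ofReal Δ * ∫⁻ x, ‖x‖ₑ ∂μ.map (rescale hΔ.ne') := by
  rw [cost, lintegral_map_equiv, ← lintegral_const_mul' _ _ ENNReal.ofReal_ne_top]
  refine lintegral_congr fun x => ?_
  rw [← ofReal_norm, norm_rescale hΔ, ← ENNReal.ofReal_mul hΔ.le, mul_div_cancel₀ _ hΔ.ne']

lemma finrank_withLp_prod : Module.finrank ℝ (WithLp 1 (ℝ × ℝ)) = 2 := by
  simp [(WithLp.linearEquiv 1 ℝ (ℝ × ℝ)).finrank_eq]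

lemma ofReal_mul_le_Vstar (hΔ : 0 < Δ) (hε : 0 < ε) {V : ℝ} (hV : 0 ≤ V)
    (hVmin : ∀ γ ∈ Set.Icc 0 1, V ≤ stairMean (exp (-ε)) γ) :
    ENNReal.ofReal (Δ * V) ≤ Vstar Δ ε := by
  refine le_iInf₂ fun μ ⟨_, hμ⟩ => ?_
  have := Measure.isProbabilityMeasure_map (μ := μ) (rescale hΔ.ne').measurable.aemeasurable
  rw [cost_eq hΔ, ENNReal.ofReal_mul hΔ.le]
  gcongr
  exact ((dpc_iff_isDP_map hΔ).1 hμ).ofReal_le_lintegral_enorm finrank_withLp_prod hε hV hVmin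

lemma Vstar_le_ofReal_mul_stairMean (hΔ : 0 < Δ) (hε : 0 < ε) {γ : ℝ} (hγ : γ ∈ Set.Icc 0 1) :
    Vstar Δ ε ≤ ENNReal.ofReal (Δ * stairMean (exp (-ε)) γ) := by
  obtain ⟨ρ, hρ, hdp, hmean⟩ := exists_isDP_lintegral_enorm_eq finrank_withLp_prod hε hγ
  set e := rescale hΔ.ne'
  have hmap : (ρ.map e.symm).map e = ρ := e.map_map_symm
  have hprob := Measure.isProbabilityMeasure_map (μ := ρ) e.symm.measurable.aemeasurable
  rw [ENNReal.ofReal_mul hΔ.le, ← hmean, ← hmap, ← cost_eq hΔ]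
  exact iInf₂_le _ ⟨hprob, (dpc_iff_isDP_map hΔ).2 (by rwa [hmap])⟩

lemma isGLB_Vstar_div (hΔ : 0 < Δ) (hε : 0 < ε) :
    IsGLB (stairMean (exp (-ε)) '' Set.Icc 0 1) ((Vstar Δ ε).toReal / Δ) := by
  refine ⟨Set.forall_mem_image.2 fun γ hγ => ?_, fun b hb => ?_⟩
  · have nonneg : 0 ≤ stairMean (exp (-ε)) γ :=
      stairMean_nonneg (exp_pos _).le (exp_le_one_iff.2 (by linarith)) hγ.1
    exact (div_le_iff₀' hΔ).2 <| ENNReal.toReal_le_of_le_ofReal (mul_nonneg hΔ.le nonneg)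
      (Vstar_le_ofReal_mul_stairMean hΔ hε hγ)
  rcases le_or_gt b 0 with hb0 | hb0
  · exact hb0.trans (div_nonneg ENNReal.toReal_nonneg hΔ.le)
  have finite : Vstar Δ ε ≠ ⊤ := ne_top_of_le_ne_top ENNReal.ofReal_ne_top
    (Vstar_le_ofReal_mul_stairMean hΔ hε (Set.left_mem_Icc.2 zero_le_one))
  rw [le_div_iff₀' hΔ, ← ENNReal.ofReal_le_iff_le_toReal finite]
  exact ofReal_mul_le_Vstar hΔ hε hb0.le fun γ hγ => hb ⟨γ, hγ, rfl⟩

end Rescaling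

section HighPrivacy

lemma abs_geomCenter_exp_neg_sub_le {x : ℝ} (h0 : 0 < x) (h1 : x < 1) :
    |geomCenter (exp (-x)) - (1 / x + x / 12)| ≤ x ^ 3 := by
  set q := exp (-x) with hq
  have taylor : |q - (1 - x + x ^ 2 / 2 - x ^ 3 / 6 + x ^ 4 / 24)| ≤ x ^ 5 / 100 := by
    have := Real.exp_bound (x := -x) (by rw [abs_neg, abs_of_pos h0]; exact h1.le) (n := 5)
      (by norm_num)
    rw [abs_neg, abs_of_pos h0] at this
    convert this using 1
    · congr 2
      simp only [Finset.sum_range_succ, Finset.sum_range_zero, Nat.factorial]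
      push_cast
      ring
    · norm_num [Nat.factorial]
      ring
  have hq_gap : x / 2 ≤ 1 - q := by
    have : q * (1 + x) ≤ 1 := by
      rw [hq, exp_neg, inv_mul_le_iff₀ (exp_pos x)]
      linarith [add_one_le_exp x]
    nlinarith
  have numerator : |q * (12 + 6 * x + x ^ 2) - (12 - 6 * x + x ^ 2)| ≤ x ^ 5 / 2 := by
    obtain ⟨lower, upper⟩ := abs_le.1 taylor
    have weight : 0 < 12 + 6 * x + x ^ 2 := by positivity
    have bound : x ^ 5 * x ≤ x ^ 5 := mul_le_of_le_one_right (by positivity) h1.le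
    have bound' : x ^ 5 * x ^ 2 ≤ x ^ 5 :=
      mul_le_of_le_one_right (by positivity) (pow_le_one₀ h0.le h1.le)
    rw [abs_le]
    constructor <;> nlinarith [mul_le_mul_of_nonneg_right lower weight.le,
      mul_le_mul_of_nonneg_right upper weight.le, pow_pos h0 5, pow_pos h0 6]
  have combine : geomCenter q - (1 / x + x / 12) =
      (q * (12 + 6 * x + x ^ 2) - (12 - 6 * x + x ^ 2)) / (12 * x * (1 - q)) := by
    have : 1 - q ≠ 0 := by linarith
    rw [geomCenter]
    field
  rw [combine, abs_div, abs_of_pos (by nlinarith : 0 < 12 * x * (1 - q)),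
    div_le_iff₀ (by nlinarith)]
  nlinarith [pow_pos h0 3, pow_pos h0 4, pow_pos h0 5]

/-- The normalized remainder in `coth (x / 2) / 2 = 1 / x + x / 12 + O(x ^ 3)`. -/
def centerRemainder (x : ℝ) : ℝ := (geomCenter (exp (-x)) - (1 / x + x / 12)) / x ^ 2

lemma tendsto_centerRemainder : Tendsto centerRemainder (𝓝[>] 0) (𝓝 0) := by
  refine squeeze_zero_norm' ?_ (tendsto_id.mono_left nhdsWithin_le_nhds)
  filter_upwards [Ioo_mem_nhdsGT zero_lt_one] with x ⟨h0, h1⟩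
  rw [centerRemainder, norm_eq_abs, abs_div, abs_of_pos (pow_pos h0 2), div_le_iff₀ (pow_pos h0 2)]
  exact (abs_geomCenter_exp_neg_sub_le h0 h1).trans_eq (by simp only [id]; ring)

lemma abs_exp_neg_lt_one {x : ℝ} (hx : 0 < x) : |exp (-x)| < 1 := by
  rw [abs_exp, exp_lt_one_iff]
  linarith

/-- The polynomial in `p = (x, s)` equal to `x * geomCenter (exp (-x))` at
`s = centerRemainder x`. -/
def scaledCenter (p : ℝ × ℝ) : ℝ := 1 + p.1 ^ 2 / 12 + p.1 ^ 3 * p.2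

/-- The polynomial in `p = (x, s)` and `t = γ - 1 / 2` equal to `x ^ 2` times the denominator of
`stairMean (exp (-x)) γ` at `s = centerRemainder x`. -/
def gapDenominator (p : ℝ × ℝ) (γ : ℝ) : ℝ :=
  ((scaledCenter p + p.1 * (γ - 1 / 2)) ^ 2 + scaledCenter p ^ 2 - p.1 ^ 2 / 4) / 2

/-- The polynomial in `p = (x, s)` and `t = γ - 1 / 2` equal to the numerator of
`stairMean (exp (-x)) γ - 2 / x` at `s = centerRemainder x`. All negative powers of `x` cancel,
by `geomMoment_three_sub`. -/
def gapNumerator (p : ℝ × ℝ) (γ : ℝ) : ℝ :=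
  let x := p.1
  let s := p.2
  let t := γ - 1 / 2
  let y := scaledCenter p
  t ^ 3 / 3 - t / 4 + (1 / 6 + 2 * x * s) * t * y + (x / 6 + 2 * x ^ 2 * s) * (t ^ 2 / 2 - 1 / 8) +
    y * (x / 72 + x ^ 2 * s / 6 + 2 * s * y)

/-- The normalized gap to the Laplacian cost, `(stairMean (exp (-x)) γ - 2 / x) / x ^ 2`, continued
to `x = 0`; see `gapRatio_centerRemainder`. -/
def gapRatio (p : ℝ × ℝ) (γ : ℝ) : ℝ := gapNumerator p γ / gapDenominator p γ

lemma gapRatio_zero (γ : ℝ) : gapRatio 0 γ = (γ - 1 / 2) ^ 3 / 3 - (γ - 1 / 2) / 12 := by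
  simp only [gapRatio, gapNumerator, gapDenominator, scaledCenter, Prod.fst_zero, Prod.snd_zero]
  ring

lemma continuousAt_uncurry_gapRatio (γ : ℝ) :
    ContinuousAt (Function.uncurry gapRatio) (0, γ) := by
  refine ContinuousAt.div ?_ ?_ ?_
  · unfold gapNumerator scaledCenter
    fun_prop
  · unfold gapDenominator scaledCenter
    fun_prop
  · norm_num [gapDenominator, scaledCenter]

section

variable {x γ : ℝ}

lemma scaledCenter_centerRemainder (hx : x ≠ 0) :
    scaledCenter (x, centerRemainder x) = x * geomCenter (exp (-x)) := by
  rw [scaledCenter, centerRemainder]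
  field

lemma gapDenominator_centerRemainder (hx : 0 < x) :
    gapDenominator (x, centerRemainder x) γ = x ^ 2 * (geomMoment (exp (-x)) 2 γ / 2) := by
  rw [gapDenominator, scaledCenter_centerRemainder hx.ne', geomMoment_two (abs_exp_neg_lt_one hx)]
  ring

lemma gapNumerator_centerRemainder (hx : 0 < x) :
    gapNumerator (x, centerRemainder x) γ =
      geomMoment (exp (-x)) 3 γ / 3 - 2 / x * (geomMoment (exp (-x)) 2 γ / 2) := by
  have hq := abs_exp_neg_lt_one hx
  rw [← sub_add_cancel (geomMoment _ 3 γ / 3)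
      (2 * geomCenter (exp (-x)) * (geomMoment (exp (-x)) 2 γ / 2)),
    geomMoment_three_sub hq, geomMoment_two hq]
  simp only [gapNumerator, scaledCenter_centerRemainder hx.ne']
  rw [centerRemainder]
  field

lemma gapRatio_centerRemainder (hx : 0 < x) (hγ : 0 ≤ γ) :
    gapRatio (x, centerRemainder x) γ = (stairMean (exp (-x)) γ - 2 / x) / x ^ 2 := by
  have mass := (geomMoment_two_pos (exp_pos (-x)) (exp_lt_one_iff.2 (by linarith)) hγ).ne'
  rw [gapRatio, gapDenominator_centerRemainder hx, gapNumerator_centerRemainder hx, stairMean]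
  field

end

lemma isLeast_gapRatio_zero : IsLeast (gapRatio 0 '' Set.Icc 0 1) (-(1 / (36 * √3))) := by
  set τ := 1 / (2 * √3) with hτ
  have hsq : τ ^ 2 = 1 / 12 := by
    rw [hτ, div_pow, mul_pow, Real.sq_sqrt zero_le_three]
    norm_num
  have hτ0 : 0 < τ := by positivity
  have value : -(1 / (36 * √3)) = -τ / 18 := by
    rw [hτ]
    field
  have factor (γ : ℝ) : gapRatio 0 γ - -τ / 18 =
      (γ - 1 / 2 - τ) ^ 2 * (γ - 1 / 2 + 2 * τ) / 3 := by
    rw [gapRatio_zero]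
    linear_combination (γ - 1 / 2 - 2 / 3 * τ) * hsq
  rw [value]
  refine ⟨⟨1 / 2 + τ, ⟨by linarith, by nlinarith⟩, ?_⟩, Set.forall_mem_image.2 fun γ hγ => ?_⟩
  · linarith [factor (1 / 2 + τ)]
  · have : 0 ≤ γ - 1 / 2 + 2 * τ := by nlinarith [hγ.1]
    have := mul_nonneg (sq_nonneg (γ - 1 / 2 - τ)) this
    linarith [factor γ]

lemma tendsto_Vstar_sub_div_sq {Δ : ℝ} (hΔ : 0 < Δ) :
    Tendsto (fun ε => ((Vstar Δ ε).toReal - 2 * Δ / ε) / ε ^ 2) (𝓝[>] 0)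
      (𝓝 (-(Δ / (36 * √3)))) := by
  have param : Tendsto (fun ε => (ε, centerRemainder ε)) (𝓝[>] 0) (𝓝 0) :=
    (tendsto_id.mono_left nhdsWithin_le_nhds).prodMk_nhds tendsto_centerRemainder
  have uniform : TendstoUniformlyOn (fun ε => gapRatio (ε, centerRemainder ε)) (gapRatio 0) (𝓝[>] 0)
      (Set.Icc 0 1) := fun U hU => param.eventually <|
    tendstoUniformlyOn_of_continuousAt isCompact_Icc (fun γ _ => continuousAt_uncurry_gapRatio γ)
      U hU
  have rescaled : ∀ᶠ ε in 𝓝[>] 0, IsGLB (gapRatio (ε, centerRemainder ε) '' Set.Icc 0 1)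
      (((Vstar Δ ε).toReal / Δ - 2 / ε) / ε ^ 2) := by
    filter_upwards [self_mem_nhdsWithin] with ε hε
    rw [Set.image_congr fun γ hγ => gapRatio_centerRemainder hε hγ.1]
    exact isGLB_image_sub_div (isGLB_Vstar_div hΔ hε) _ (pow_pos hε 2)
  convert (tendsto_of_isGLB_image uniform isLeast_gapRatio_zero.isGLB rescaled).const_mul Δ using 2
  · field
  · ring

end HighPrivacy

/-- High privacy regime: V*(ε) = 2Δ/ε − Δε²/(36√3) + O(ε³) as ε → 0⁺; precisely,
(V*(ε) − 2Δ/ε)/ε² → −Δ/(36√3), and in particular the gap between V*(ε) and the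
Laplacian cost 2Δ/ε tends to 0. -/
theorem Vstar_high_privacy (Δ : ℝ) (hΔ : 0 < Δ) :
    Tendsto (fun ε : ℝ => ((Vstar Δ ε).toReal - 2 * Δ / ε) / ε ^ 2)
      (nhdsWithin 0 (Set.Ioi 0)) (nhds (-(Δ / (36 * Real.sqrt 3)))) ∧
    Tendsto (fun ε : ℝ => (Vstar Δ ε).toReal - 2 * Δ / ε)
      (nhdsWithin 0 (Set.Ioi 0)) (nhds 0) := by
  have quadratic := tendsto_Vstar_sub_div_sq hΔ
  have square : Tendsto (fun ε : ℝ => ε ^ 2) (𝓝[>] 0) (𝓝 0) :=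
    ((continuous_pow 2).tendsto' 0 0 (by simp)).mono_left nhdsWithin_le_nhds
  have gap := quadratic.mul square
  rw [mul_zero] at gap
  refine ⟨quadratic, gap.congr' ?_⟩
  filter_upwards [self_mem_nhdsWithin] with ε hε
  exact div_mul_cancel₀ _ (pow_pos hε 2).ne'
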